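/- arXiv:2602.15636 — 5 statements merged into one kernel-verified Lean document; each statement's English description precedes it below -/
import Mathlib

section
/- Let Γ be a finite connected simple graph. Define three graphs: C(Γ), whose vertices are the cycle subgraphs of Γ that are standard subgraphs, with two distinct cycles adjacent exactly when they are vertex-disjoint; S(Γ), whose vertices are the standard subgraphs of Γ, with distinct standard subgraphs Γ₁, Γ₂ adjacent exactly when Γ₁ ⊆ Γ₂ ∪ Γ₂^⊥ or Γ₂ ⊆ Γ₁ ∪ Γ₁^⊥; and M(Γ), the subgraph of S(Γ) induced on the maximally standard subgraphs. Then the following are equivalent: (1) C(Γ) is connected; (2) S(Γ) is connected; (3) M(Γ) is connected (where a possibly empty graph counts as connected when any two of its vertices are joined by a walk). -/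
/-!
Every standard subgraph is connected of minimum degree at least two (call such a subgraph *good*),
and a good subgraph is standard exactly when some good subgraph is vertex-disjoint from it. The
orthogonal complement `orth H` is the largest subgraph of minimum degree at least two that is
vertex-disjoint from `H`. Since a connected subgraph of `K ⊔ orth K` lies on one side, adjacency in
`S(Γ)` means "nested or vertex-disjoint".

*`C(Γ)` versus `S(Γ)`.* A standard subgraph contains a cycle, which is again standard. Two cycles in
the same standard `H` are both disjoint from a cycle in `orth H`, so they are at distance at most
two in `C(Γ)`; hence walks can be transported in both directions.

*`S(Γ)` versus `M(Γ)`.* The key point, which uses connectedness of `Γ`, is `exists_dual_pair`: any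
two disjoint good subgraphs can be enlarged to disjoint good `H'`, `K'` with `orth H' = K'` and
`orth K' = H'`, so that both are maximally standard. One takes a maximal pair of disjoint good
subgraphs; a third good subgraph disjoint from both could be joined to one of them inside the
complement of the other and pruned, contradicting maximality. In particular every standard subgraph
lies in a maximally standard one. Moreover, two maximally standard `X`, `Y` containing a common
standard `H` are joined in `M(Γ)`: one passes to `orth X` and `orth Y`, which are adjacent if
disjoint, and otherwise lie in the standard subgraph `orth X ⊔ orth Y`, hence in a common maximally
standard subgraph. These facts let a walk in `S(Γ)` be replaced by one in `M(Γ)`.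
-/


open scoped Classical

noncomputable section

namespace GraphBraid

/-- A cycle subgraph: a subgraph with at least one edge which is connected and all of whose
vertices have degree exactly two (inside the subgraph). -/
def IsCycleSubgraph {W : Type*} {G : SimpleGraph W} (H : G.Subgraph) : Prop :=
  H.edgeSet.Nonempty ∧ H.Connected ∧ ∀ v ∈ H.verts, (H.neighborSet v).ncard = 2

/-- A subgraph is leafless when no vertex has degree one inside the subgraph. -/
def IsLeafless {W : Type*} {G : SimpleGraph W} (H : G.Subgraph) : Prop :=
  ∀ v ∈ H.verts, (H.neighborSet v).ncard ≠ 1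

variable {V : Type} [Fintype V] [DecidableEq V]

/-- One pruning step: delete all vertices of degree at most one. -/
def pruneStep {Γ : SimpleGraph V} (H : Γ.Subgraph) : Γ.Subgraph :=
  H.deleteVerts {v | (H.neighborSet v).ncard ≤ 1}

/-- Iterated pruning: delete vertices of degree at most one until none remain (iterating
`card V` times guarantees stabilization on a finite graph). -/
def prune {Γ : SimpleGraph V} (H : Γ.Subgraph) : Γ.Subgraph :=
  pruneStep^[Fintype.card V] H

/-- The orthogonal complement of a subgraph: prune the induced subgraph on the complement
of its vertex set. -/
def orth {Γ : SimpleGraph V} (H : Γ.Subgraph) : Γ.Subgraph :=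
  prune ((⊤ : Γ.Subgraph).deleteVerts H.verts)

/-- A standard subgraph: connected, with at least one edge, leafless, and with nontrivial
orthogonal complement. -/
def IsStandard {Γ : SimpleGraph V} (H : Γ.Subgraph) : Prop :=
  H.Connected ∧ H.edgeSet.Nonempty ∧ IsLeafless H ∧ (orth H).edgeSet.Nonempty

/-- A maximally standard subgraph: standard, with standard orthogonal complement, and equal
to its double orthogonal complement. -/
def IsMaxStandard {Γ : SimpleGraph V} (H : Γ.Subgraph) : Prop :=
  IsStandard H ∧ IsStandard (orth H) ∧ orth (orth H) = H

/-- `K` is a connected component of `H`: a maximal connected subgraph of `H`. -/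
def IsComponentOf {Γ : SimpleGraph V} (K H : Γ.Subgraph) : Prop :=
  K ≤ H ∧ K.Connected ∧ ∀ K' : Γ.Subgraph, K ≤ K' → K' ≤ H → K'.Connected → K' = K

/-- Two vertex-disjoint subgraphs are separable if they are contained in a pair of
vertex-disjoint leafless subgraphs. -/
def Separable {Γ : SimpleGraph V} (Λ₁ Λ₂ : Γ.Subgraph) : Prop :=
  ∃ G₁ G₂ : Γ.Subgraph, IsLeafless G₁ ∧ IsLeafless G₂ ∧ Disjoint G₁.verts G₂.verts ∧
    Λ₁ ≤ G₁ ∧ Λ₂ ≤ G₂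

/-- The curve graph `C(Γ)`: vertices are the cycle subgraphs which are standard, adjacent
when distinct and vertex-disjoint. -/
def curveGraph (Γ : SimpleGraph V) :
    SimpleGraph {H : Γ.Subgraph // IsCycleSubgraph H ∧ IsStandard H} :=
  SimpleGraph.fromRel fun H K => Disjoint H.1.verts K.1.verts

/-- The graph `S(Γ)` of standard subgraphs: `Γ₁`, `Γ₂` are adjacent when they are distinct
and `Γ₁ ⊆ Γ₂ ∪ Γ₂^⊥` or `Γ₂ ⊆ Γ₁ ∪ Γ₁^⊥`. -/
def standardGraph (Γ : SimpleGraph V) :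
    SimpleGraph {H : Γ.Subgraph // IsStandard H} :=
  SimpleGraph.fromRel fun H K => H.1 ≤ K.1 ⊔ orth K.1 ∨ K.1 ≤ H.1 ⊔ orth H.1

/-- The graph `M(Γ)`: the subgraph of `S(Γ)` induced on the maximally standard
subgraphs. -/
def maxStandardGraph (Γ : SimpleGraph V) :
    SimpleGraph {H : {H : Γ.Subgraph // IsStandard H} // IsMaxStandard H.1} :=
  (standardGraph Γ).induce {H : {H : Γ.Subgraph // IsStandard H} | IsMaxStandard H.1}

set_option linter.unusedSectionVars false

/-! ### Subgraphs of minimum degree at least two -/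

/-- A subgraph all of whose vertices have degree at least two inside the subgraph. -/
def IsCore {Γ : SimpleGraph V} (H : Γ.Subgraph) : Prop :=
  ∀ v ∈ H.verts, 2 ≤ (H.neighborSet v).ncard

/-- A connected subgraph of minimum degree at least two. -/
def IsGood {Γ : SimpleGraph V} (H : Γ.Subgraph) : Prop :=
  H.Connected ∧ IsCore H

/-- A connected subgraph has an edge leaving any vertex set that contains some but not all of
its vertices. -/
lemma exists_adj_boundary {Γ : SimpleGraph V} {H : Γ.Subgraph} (hH : H.Connected) (S : Set V)
    {a b : V} (ha : a ∈ H.verts) (haS : a ∈ S) (hb : b ∈ H.verts) (hbS : b ∉ S) :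
    ∃ x y, H.Adj x y ∧ x ∈ S ∧ y ∉ S := by
  obtain ⟨p⟩ := hH.coe.preconnected ⟨a, ha⟩ ⟨b, hb⟩
  obtain ⟨d, -, h1, h2⟩ := p.exists_boundary_dart {x | x.1 ∈ S} haS hbS
  exact ⟨d.fst, d.snd, d.adj, h1, h2⟩

lemma ncard_neighborSet_mono {Γ : SimpleGraph V} {H K : Γ.Subgraph} (h : H ≤ K) (v : V) :
    (H.neighborSet v).ncard ≤ (K.neighborSet v).ncard :=
  Set.ncard_le_ncard (fun _ hw => h.2 hw) (Set.toFinite _)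

lemma IsCore.sup {Γ : SimpleGraph V} {H K : Γ.Subgraph} (hH : IsCore H) (hK : IsCore K) :
    IsCore (H ⊔ K) := by
  rintro v (hv | hv)
  · exact (hH v hv).trans (ncard_neighborSet_mono le_sup_left v)
  · exact (hK v hv).trans (ncard_neighborSet_mono le_sup_right v)

lemma IsCore.exists_adj {Γ : SimpleGraph V} {H : Γ.Subgraph} (hH : IsCore H) {v : V}
    (hv : v ∈ H.verts) : ∃ w, H.Adj v w := by
  have h := hH v hv
  have : (H.neighborSet v).Nonempty := by
    rw [← Set.ncard_pos (Set.toFinite _)]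
    omega
  exact this

lemma IsGood.edgeSet_nonempty {Γ : SimpleGraph V} {H : Γ.Subgraph} (hH : IsGood H) :
    H.edgeSet.Nonempty := by
  obtain ⟨v, hv⟩ := hH.1.nonempty
  obtain ⟨w, hw⟩ := hH.2.exists_adj hv
  exact ⟨s(v, w), hw⟩

lemma connected_sup_of_mem {Γ : SimpleGraph V} {H K : Γ.Subgraph} (hH : H.Connected)
    (hK : K.Connected) {v : V} (h1 : v ∈ H.verts) (h2 : v ∈ K.verts) : (H ⊔ K).Connected :=
  SimpleGraph.Subgraph.connected_sup hH.preconnected hK.preconnected ⟨v, h1, h2⟩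

/-- Connected leafless subgraphs with an edge have minimum degree at least two. -/
lemma isGood_of_leafless {Γ : SimpleGraph V} {H : Γ.Subgraph} (hc : H.Connected)
    (he : H.edgeSet.Nonempty) (hl : IsLeafless H) : IsGood H := by
  refine ⟨hc, fun v hv => ?_⟩
  have h1 := hl v hv
  suffices h0 : (H.neighborSet v).ncard ≠ 0 by omega
  intro h0
  rw [Set.ncard_eq_zero (Set.toFinite _)] at h0
  have hno : ∀ w, ¬ H.Adj v w := fun w hw => by
    have : w ∈ H.neighborSet v := hw
    rw [h0] at this
    exact this
  obtain ⟨e, he⟩ := he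
  induction e with
  | _ a b =>
    have hab : H.Adj a b := he
    have hav : a ≠ v := fun h => hno b (h ▸ hab)
    obtain ⟨x, y, hxy, hx, -⟩ := exists_adj_boundary hc {v} hv rfl hab.fst_mem hav
    rw [Set.mem_singleton_iff] at hx
    exact hno y (hx ▸ hxy)

/-! ### Pruning and orthogonal complements -/

lemma pruneStep_le {Γ : SimpleGraph V} (H : Γ.Subgraph) : pruneStep H ≤ H :=
  SimpleGraph.Subgraph.deleteVerts_le

lemma IsCore.le_pruneStep {Γ : SimpleGraph V} {H K : Γ.Subgraph} (hK : IsCore K) (h : K ≤ H) :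
    K ≤ pruneStep H := by
  have key : ∀ v ∈ K.verts, v ∉ {v | (H.neighborSet v).ncard ≤ 1} := fun v hv hv' => by
    have h1 := hK v hv
    have h2 := ncard_neighborSet_mono h v
    have h3 : (H.neighborSet v).ncard ≤ 1 := hv'
    omega
  refine ⟨fun v hv => ⟨h.1 hv, key v hv⟩, fun v w hvw => ?_⟩
  exact SimpleGraph.Subgraph.deleteVerts_adj.2 ⟨h.1 hvw.fst_mem, key v hvw.fst_mem,
    h.1 hvw.snd_mem, key w hvw.snd_mem, h.2 hvw⟩

/-- Removing vertices of degree at most one does not disconnect a graph. -/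
lemma preconnected_pruneStep {Γ : SimpleGraph V} {H : Γ.Subgraph} (h : H.Preconnected) :
    (pruneStep H).Preconnected := by
  refine ⟨(SimpleGraph.Subgraph.coeDeleteVertsIso _).preconnected_iff.2
    (h.coe.induce_of_degree_eq_one ?_)⟩
  intro v hv x hx y hy
  have hv' : (H.neighborSet v).ncard ≤ 1 := not_not.1 hv
  rw [Set.ncard_le_one (Set.toFinite _)] at hv'
  exact Subtype.ext (hv' x hx y hy)

lemma prune_le {Γ : SimpleGraph V} (H : Γ.Subgraph) : prune H ≤ H := by
  unfold prune
  generalize Fintype.card V = n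
  induction n with
  | zero => exact le_rfl
  | succ n ih =>
    rw [Function.iterate_succ_apply']
    exact (pruneStep_le _).trans ih

lemma IsCore.le_prune {Γ : SimpleGraph V} {H K : Γ.Subgraph} (hK : IsCore K) (h : K ≤ H) :
    K ≤ prune H := by
  unfold prune
  generalize Fintype.card V = n
  induction n with
  | zero => exact h
  | succ n ih =>
    rw [Function.iterate_succ_apply']
    exact hK.le_pruneStep ih

lemma preconnected_prune {Γ : SimpleGraph V} {H : Γ.Subgraph} (h : H.Preconnected) :
    (prune H).Preconnected := by
  unfold prune
  generalize Fintype.card V = n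
  induction n with
  | zero => exact h
  | succ n ih =>
    rw [Function.iterate_succ_apply']
    exact preconnected_pruneStep ih

lemma isCore_prune {Γ : SimpleGraph V} (H : Γ.Subgraph) : IsCore (prune H) := by
  -- Every pruning step that changes something removes at least one vertex.
  have key : ∀ n, IsCore (pruneStep^[n] H) ∨
      (pruneStep^[n] H).verts.ncard + n ≤ Fintype.card V := by
    intro n
    induction n with
    | zero =>
      right
      have := Set.ncard_le_card H.verts
      simpa [Nat.card_eq_fintype_card] using this
    | succ n ih =>
      rw [Function.iterate_succ_apply']
      generalize pruneStep^[n] H = K at ih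
      by_cases hK : IsCore K
      · have : pruneStep K = K := le_antisymm (pruneStep_le K) (hK.le_pruneStep le_rfl)
        left
        rwa [this]
      · right
        have h1 := ih.resolve_left hK
        unfold IsCore at hK
        push Not at hK
        obtain ⟨v, hv, hlt⟩ := hK
        have h2 : (pruneStep K).verts.ncard < K.verts.ncard := by
          refine Set.ncard_lt_ncard ⟨(pruneStep_le K).1, fun h => ?_⟩ (Set.toFinite _)
          exact (h hv).2 (show (K.neighborSet v).ncard ≤ 1 by omega)
        omega
  rcases key (Fintype.card V) with h | h
  · exact h
  · intro v hv
    have h0 : (prune H).verts.ncard = 0 := by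
      unfold prune
      omega
    rw [Set.ncard_eq_zero (Set.toFinite _)] at h0
    rw [h0] at hv
    exact hv.elim

/-- A connected subgraph containing a good one has a good core. -/
lemma isGood_prune {Γ : SimpleGraph V} {H K : Γ.Subgraph} (hH : H.Connected) (hK : IsGood K)
    (h : K ≤ H) : IsGood (prune H) :=
  ⟨SimpleGraph.Subgraph.connected_iff.2 ⟨preconnected_prune hH.preconnected,
    hK.1.nonempty.mono (hK.2.le_prune h).1⟩, isCore_prune H⟩

lemma isCore_orth {Γ : SimpleGraph V} (H : Γ.Subgraph) : IsCore (orth H) := isCore_prune _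

lemma disjoint_orth {Γ : SimpleGraph V} (H : Γ.Subgraph) : Disjoint H.verts (orth H).verts :=
  Set.disjoint_right.2 fun _ hv => ((prune_le _).1 hv).2

lemma IsCore.le_orth {Γ : SimpleGraph V} {H K : Γ.Subgraph} (hK : IsCore K)
    (h : Disjoint H.verts K.verts) : K ≤ orth H := by
  have hd : ∀ v ∈ K.verts, v ∉ H.verts := fun v hv hv' => Set.disjoint_left.1 h hv' hv
  refine hK.le_prune ⟨fun v hv => ⟨trivial, hd v hv⟩, fun v w hvw => ?_⟩
  exact SimpleGraph.Subgraph.deleteVerts_adj.2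
    ⟨trivial, hd v hvw.fst_mem, trivial, hd w hvw.snd_mem, hvw.adj_sub⟩

lemma disjoint_of_le_left {Γ : SimpleGraph V} {H H' K : Γ.Subgraph} (h : H ≤ H')
    (hd : Disjoint H'.verts K.verts) : Disjoint H.verts K.verts :=
  hd.mono_left h.1

/-! ### Components, cycles and standard subgraphs -/

/-- In a subgraph of minimum degree at least two, the component of a vertex is good. -/
lemma IsCore.exists_component {Γ : SimpleGraph V} {L : Γ.Subgraph} (hL : IsCore L) {v : V}
    (hv : v ∈ L.verts) :
    ∃ C : Γ.Subgraph, IsGood C ∧ C ≤ L ∧ v ∈ C.verts ∧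
      ∀ x y, x ∈ C.verts → L.Adj x y → C.Adj x y := by
  obtain ⟨C, hC, hmax⟩ := (Set.toFinite {C : Γ.Subgraph | C.Connected ∧ C ≤ L}).exists_le_maximal
    (a := Γ.singletonSubgraph v)
    ⟨SimpleGraph.Subgraph.singletonSubgraph_connected,
      (SimpleGraph.singletonSubgraph_le_iff v L).2 hv⟩
  have hadj : ∀ x y, x ∈ C.verts → L.Adj x y → C.Adj x y := by
    intro x y hx hxy
    have hle : C ⊔ Γ.subgraphOfAdj hxy.adj_sub ≤ C := by
      refine hmax.2 ⟨connected_sup_of_mem hmax.1.1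
        (SimpleGraph.Subgraph.subgraphOfAdj_connected _) hx (by simp), ?_⟩ le_sup_left
      exact sup_le hmax.1.2 (SimpleGraph.subgraphOfAdj_le_of_adj L hxy)
    exact hle.2 (Or.inr (by simp))
  refine ⟨C, ⟨hmax.1.1, fun x hx => ?_⟩, hmax.1.2, hC.1 (by simp), hadj⟩
  exact (hL x (hmax.1.2.1 hx)).trans
    (Set.ncard_le_ncard (fun y hy => hadj x y hx hy) (Set.toFinite _))

/-- A connected subgraph of minimum degree at least two contains a cycle, since a finite tree
with an edge has a leaf. -/
lemma IsGood.exists_cycle {Γ : SimpleGraph V} {L : Γ.Subgraph} (hL : IsGood L) :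
    ∃ c : Γ.Subgraph, IsCycleSubgraph c ∧ c ≤ L := by
  have hnac : ¬ L.coe.IsAcyclic := by
    intro hac
    have htree : L.coe.IsTree := ⟨hL.1.coe, hac⟩
    obtain ⟨v, hv⟩ := hL.1.nonempty
    obtain ⟨w, hw⟩ := hL.2.exists_adj hv
    have : Nontrivial L.verts := ⟨⟨v, hv⟩, ⟨w, hw.snd_mem⟩, fun h => hw.ne (congrArg Subtype.val h)⟩
    obtain ⟨x, hx⟩ := htree.exists_vert_degree_one_of_nontrivial
    rw [SimpleGraph.Subgraph.coe_degree, SimpleGraph.Subgraph.degree,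
      ← Nat.card_eq_fintype_card, Nat.card_coe_set_eq] at hx
    have := hL.2 x x.2
    omega
  unfold SimpleGraph.IsAcyclic at hnac
  push Not at hnac
  obtain ⟨v, p, hp⟩ := hnac
  have hq : (p.map L.hom).IsCycle := hp.map SimpleGraph.Subgraph.hom_injective
  refine ⟨(p.map L.hom).toSubgraph, ⟨?_, SimpleGraph.Walk.toSubgraph_connected _, ?_⟩, ?_⟩
  · exact ⟨s(_, _), SimpleGraph.Walk.toSubgraph_adj_snd _ hq.not_nil⟩
  · intro x hx
    exact hq.ncard_neighborSet_toSubgraph_eq_two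
      ((SimpleGraph.Walk.mem_verts_toSubgraph _).1 hx)
  · rw [SimpleGraph.Walk.toSubgraph_map]
    exact SimpleGraph.Subgraph.coeSubgraph_le _

lemma IsCycleSubgraph.isGood {Γ : SimpleGraph V} {c : Γ.Subgraph} (hc : IsCycleSubgraph c) :
    IsGood c :=
  ⟨hc.2.1, fun v hv => (hc.2.2 v hv).ge⟩

lemma isStandard_of_good {Γ : SimpleGraph V} {H K : Γ.Subgraph} (hH : IsGood H) (hK : IsGood K)
    (h : Disjoint H.verts K.verts) : IsStandard H := by
  refine ⟨hH.1, hH.edgeSet_nonempty, fun v hv => ?_, ?_⟩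
  · have := hH.2 v hv
    omega
  · exact hK.edgeSet_nonempty.mono (SimpleGraph.Subgraph.edgeSet_mono (hK.2.le_orth h))

lemma IsStandard.isGood {Γ : SimpleGraph V} {H : Γ.Subgraph} (hH : IsStandard H) : IsGood H :=
  isGood_of_leafless hH.1 hH.2.1 hH.2.2.1

lemma IsStandard.exists_disjoint {Γ : SimpleGraph V} {H : Γ.Subgraph} (hH : IsStandard H) :
    ∃ K : Γ.Subgraph, IsGood K ∧ Disjoint H.verts K.verts := by
  obtain ⟨e, he⟩ := hH.2.2.2
  induction e with
  | _ a b =>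
    have hab : (orth H).Adj a b := he
    obtain ⟨C, hC, hle, -⟩ := (isCore_orth H).exists_component hab.fst_mem
    exact ⟨C, hC, (disjoint_orth H).mono_right hle.1⟩

/-- A connected subgraph of `K ⊔ orth K` lies in `K` or is disjoint from `K`. -/
lemma le_or_disjoint {Γ : SimpleGraph V} {H K : Γ.Subgraph} (hH : H.Connected)
    (h : H ≤ K ⊔ orth K) : H ≤ K ∨ Disjoint H.verts K.verts := by
  by_contra! hcon
  obtain ⟨h1, h2⟩ := hcon
  obtain ⟨a, ha, haK⟩ := Set.not_disjoint_iff.1 h2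
  have hd : ∀ v, v ∈ K.verts → v ∉ (orth K).verts := fun v hv =>
    Set.disjoint_left.1 (disjoint_orth K) hv
  have hsub : H.verts ⊆ K.verts := by
    intro b hb
    by_contra hbK
    obtain ⟨x, y, hxy, hx, hy⟩ := exists_adj_boundary hH K.verts ha haK hb hbK
    rcases h.2 hxy with h' | h'
    · exact hy h'.snd_mem
    · exact hd x hx h'.fst_mem
  refine h1 ⟨hsub, fun x y hxy => ?_⟩
  rcases h.2 hxy with h' | h'
  · exact h'
  · exact (hd x (hsub hxy.fst_mem) h'.fst_mem).elim

lemma nested_or_disjoint_of_adj {Γ : SimpleGraph V} {H K : {H : Γ.Subgraph // IsStandard H}}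
    (h : (standardGraph Γ).Adj H K) :
    H.1 ≤ K.1 ∨ K.1 ≤ H.1 ∨ Disjoint H.1.verts K.1.verts := by
  obtain ⟨-, (h | h) | (h | h)⟩ := (SimpleGraph.fromRel_adj _ _ _).1 h
  · exact (le_or_disjoint H.2.1 h).imp id Or.inr
  · exact Or.inr ((le_or_disjoint K.2.1 h).imp id fun hd => hd.symm)
  · exact Or.inr ((le_or_disjoint K.2.1 h).imp id fun hd => hd.symm)
  · exact (le_or_disjoint H.2.1 h).imp id Or.inr

lemma standardGraph_adj {Γ : SimpleGraph V} {H K : {H : Γ.Subgraph // IsStandard H}}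
    (hne : H ≠ K) (h : H.1 ≤ K.1 ∨ Disjoint H.1.verts K.1.verts) : (standardGraph Γ).Adj H K := by
  refine (SimpleGraph.fromRel_adj _ _ _).2 ⟨hne, Or.inl (Or.inl ?_)⟩
  rcases h with h | h
  · exact h.trans le_sup_left
  · exact (H.2.isGood.2.le_orth h.symm).trans le_sup_right

lemma standardGraph_reachable {Γ : SimpleGraph V} {H K : {H : Γ.Subgraph // IsStandard H}}
    (h : H.1 ≤ K.1 ∨ Disjoint H.1.verts K.1.verts) : (standardGraph Γ).Reachable H K := by
  by_cases hne : H = K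
  · rw [hne]
  · exact (standardGraph_adj hne h).reachable

/-! ### Curve graph and graph of standard subgraphs -/

lemma IsStandard.mono {Γ : SimpleGraph V} {H c : Γ.Subgraph} (hH : IsStandard H) (hc : IsGood c)
    (h : c ≤ H) : IsStandard c := by
  obtain ⟨K, hK, hd⟩ := hH.exists_disjoint
  exact isStandard_of_good hc hK (disjoint_of_le_left h hd)

lemma IsStandard.exists_cycle {Γ : SimpleGraph V} {H : Γ.Subgraph} (hH : IsStandard H) :
    ∃ c : {H : Γ.Subgraph // IsCycleSubgraph H ∧ IsStandard H}, c.1 ≤ H := by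
  obtain ⟨c, hc, hle⟩ := hH.isGood.exists_cycle
  exact ⟨⟨c, hc, hH.mono hc.isGood hle⟩, hle⟩

lemma curveGraph_adj {Γ : SimpleGraph V}
    {c d : {H : Γ.Subgraph // IsCycleSubgraph H ∧ IsStandard H}}
    (h : Disjoint c.1.verts d.1.verts) : (curveGraph Γ).Adj c d := by
  refine (SimpleGraph.fromRel_adj _ _ _).2 ⟨?_, Or.inl h⟩
  rintro rfl
  exact c.2.2.1.nonempty.ne_empty (disjoint_self.1 h)

/-- Two cycles in a standard subgraph `H` are both disjoint from a cycle in `orth H`. -/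
lemma curveGraph_reachable_of_le {Γ : SimpleGraph V} {H : Γ.Subgraph} (hH : IsStandard H)
    {c d : {H : Γ.Subgraph // IsCycleSubgraph H ∧ IsStandard H}} (hc : c.1 ≤ H) (hd : d.1 ≤ H) :
    (curveGraph Γ).Reachable c d := by
  obtain ⟨K, hK, hdis⟩ := hH.exists_disjoint
  obtain ⟨e, he⟩ := (isStandard_of_good hK hH.isGood hdis.symm).exists_cycle
  have h1 : (curveGraph Γ).Adj c e := curveGraph_adj (hdis.mono hc.1 he.1)
  have h2 : (curveGraph Γ).Adj d e := curveGraph_adj (hdis.mono hd.1 he.1)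
  exact h1.reachable.trans h2.reachable.symm

lemma standardGraph_preconnected_of_curveGraph {Γ : SimpleGraph V}
    (h : (curveGraph Γ).Preconnected) : (standardGraph Γ).Preconnected := by
  have key : ∀ c d, (curveGraph Γ).Reachable c d →
      (standardGraph Γ).Reachable ⟨c.1, c.2.2⟩ ⟨d.1, d.2.2⟩ := by
    rintro c d ⟨p⟩
    induction p with
    | nil => exact SimpleGraph.Reachable.refl _
    | cons hadj _ ih =>
      refine (standardGraph_reachable (Or.inr ?_)).trans ih
      obtain ⟨-, h | h⟩ := (SimpleGraph.fromRel_adj _ _ _).1 hadj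
      · exact h
      · exact h.symm
  intro H K
  obtain ⟨c, hc⟩ := H.2.exists_cycle
  obtain ⟨d, hd⟩ := K.2.exists_cycle
  have h1 : (standardGraph Γ).Reachable ⟨c.1, c.2.2⟩ H := standardGraph_reachable (Or.inl hc)
  have h2 : (standardGraph Γ).Reachable ⟨d.1, d.2.2⟩ K := standardGraph_reachable (Or.inl hd)
  exact (h1.symm.trans (key c d (h c d))).trans h2

lemma curveGraph_preconnected_of_standardGraph {Γ : SimpleGraph V}
    (h : (standardGraph Γ).Preconnected) : (curveGraph Γ).Preconnected := by
  have key : ∀ H K, (standardGraph Γ).Reachable H K →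
      ∀ c d : {H : Γ.Subgraph // IsCycleSubgraph H ∧ IsStandard H}, c.1 ≤ H.1 → d.1 ≤ K.1 →
        (curveGraph Γ).Reachable c d := by
    rintro H K ⟨p⟩
    induction p with
    | @nil H => exact fun c d hc hd => curveGraph_reachable_of_le H.2 hc hd
    | @cons H L K hadj _ ih =>
      intro c d hc hd
      rcases nested_or_disjoint_of_adj hadj with hHL | hLH | hdis
      · exact ih c d (hc.trans hHL) hd
      · obtain ⟨e, he⟩ := L.2.exists_cycle
        exact (curveGraph_reachable_of_le H.2 hc (he.trans hLH)).trans (ih e d he hd)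
      · obtain ⟨e, he⟩ := L.2.exists_cycle
        exact (curveGraph_adj (hdis.mono hc.1 he.1)).reachable.trans (ih e d he hd)
  intro c d
  exact key ⟨c.1, c.2.2⟩ ⟨d.1, d.2.2⟩ (h _ _) c d le_rfl le_rfl

/-! ### Maximal pairs of disjoint good subgraphs -/

/-- If `(H, K)` is a maximal pair of disjoint good subgraphs, then no good subgraph `L` is
disjoint from both: the component of `L` in the complement of `H` and `K` is joined by an edge
to one of them, and pruning the result gives a larger pair. -/
lemma no_third_good {Γ : SimpleGraph V} (hconn : Γ.Connected) {H K L : Γ.Subgraph}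
    (hH : IsGood H) (hK : IsGood K) (hHK : Disjoint H.verts K.verts)
    (hmaxH : ∀ H', IsGood H' → Disjoint H'.verts K.verts → H ≤ H' → H' ≤ H)
    (hmaxK : ∀ K', IsGood K' → Disjoint H.verts K'.verts → K ≤ K' → K' ≤ K)
    (hL : IsGood L) (hLH : Disjoint L.verts H.verts) (hLK : Disjoint L.verts K.verts) : False := by
  obtain ⟨A, hLA, hA⟩ := (Set.toFinite {A : Γ.Subgraph | A.Connected ∧
    Disjoint A.verts H.verts ∧ Disjoint A.verts K.verts}).exists_le_maximal (a := L)
    ⟨hL.1, hLH, hLK⟩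
  obtain ⟨hAc, hAH, hAK⟩ := hA.1
  -- The argument joining `A` to one side, applied below to both sides.
  have join : ∀ P Q : Γ.Subgraph, IsGood P → Disjoint P.verts Q.verts →
      (∀ P', IsGood P' → Disjoint P'.verts Q.verts → P ≤ P' → P' ≤ P) →
      Disjoint A.verts P.verts → Disjoint A.verts Q.verts →
      ∀ a b, Γ.Adj a b → a ∈ A.verts → b ∈ P.verts → False := by
    intro P Q hP hPQ hmax hAP hAQ a b hab ha hb
    have hc1 : (A ⊔ Γ.subgraphOfAdj hab).Connected :=
      connected_sup_of_mem hAc (SimpleGraph.Subgraph.subgraphOfAdj_connected hab) ha (by simp)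
    have hc2 : (A ⊔ Γ.subgraphOfAdj hab ⊔ P).Connected :=
      connected_sup_of_mem hc1 hP.1 (Or.inr (by simp)) hb
    have hdis : Disjoint (A ⊔ Γ.subgraphOfAdj hab ⊔ P).verts Q.verts := by
      rw [Set.disjoint_left]
      rintro x ((hx | hx) | hx)
      · exact Set.disjoint_left.1 hAQ hx
      · rcases hx with rfl | rfl
        · exact Set.disjoint_left.1 hAQ ha
        · exact Set.disjoint_left.1 hPQ hb
      · exact Set.disjoint_left.1 hPQ hx
    have hle := hmax _ (isGood_prune hc2 hP le_sup_right)
      (disjoint_of_le_left (prune_le _) hdis) (hP.2.le_prune le_sup_right)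
    obtain ⟨v, hv⟩ := hL.1.nonempty
    have hvP := hle.1 ((hL.2.le_prune (hLA.trans (le_sup_left.trans le_sup_left))).1 hv)
    exact Set.disjoint_left.1 hAP (hLA.1 hv) hvP
  obtain ⟨a, ha⟩ := hAc.nonempty
  obtain ⟨h, hh⟩ := hH.1.nonempty
  obtain ⟨p⟩ := hconn.preconnected a h
  obtain ⟨d, -, hx, hy⟩ := p.exists_boundary_dart A.verts ha
    (fun h' => Set.disjoint_left.1 hAH h' hh)
  have hxy : Γ.Adj d.fst d.snd := d.adj
  by_cases hyH : d.snd ∈ H.verts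
  · exact join H K hH hHK hmaxH hAH hAK _ _ hxy hx hyH
  by_cases hyK : d.snd ∈ K.verts
  · exact join K H hK hHK.symm (fun P h1 h2 h3 => hmaxK P h1 h2.symm h3) hAK hAH _ _ hxy hx hyK
  have hext : ∀ S : Set V, d.snd ∉ S → Disjoint A.verts S →
      Disjoint (A ⊔ Γ.subgraphOfAdj hxy).verts S := by
    intro S hS hAS
    rw [Set.disjoint_left]
    rintro x (hx' | rfl | rfl)
    · exact Set.disjoint_left.1 hAS hx'
    · exact Set.disjoint_left.1 hAS hx
    · exact hS
  have hle := hA.2 (y := A ⊔ Γ.subgraphOfAdj hxy)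
    ⟨connected_sup_of_mem hAc (SimpleGraph.Subgraph.subgraphOfAdj_connected hxy) hx (by simp),
      hext _ hyH hAH, hext _ hyK hAK⟩ le_sup_left
  exact hy (hle.1 (Or.inr (by simp)))

lemma orth_eq_of_maximal {Γ : SimpleGraph V} (hconn : Γ.Connected) {H K : Γ.Subgraph}
    (hH : IsGood H) (hK : IsGood K) (hHK : Disjoint H.verts K.verts)
    (hmaxH : ∀ H', IsGood H' → Disjoint H'.verts K.verts → H ≤ H' → H' ≤ H)
    (hmaxK : ∀ K', IsGood K' → Disjoint H.verts K'.verts → K ≤ K' → K' ≤ K) :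
    orth H = K := by
  refine le_antisymm ?_ (hK.2.le_orth hHK)
  have key : ∀ v ∈ (orth H).verts, v ∈ K.verts ∧ ∀ w, (orth H).Adj v w → K.Adj v w := by
    intro v hv
    obtain ⟨C, hC, hCle, hvC, hadj⟩ := (isCore_orth H).exists_component hv
    have hHC : Disjoint H.verts C.verts := (disjoint_orth H).mono_right hCle.1
    by_cases hCK : Disjoint C.verts K.verts
    · exact (no_third_good hconn hH hK hHK hmaxH hmaxK hC hHC.symm hCK).elim
    obtain ⟨x, hxC, hxK⟩ := Set.not_disjoint_iff.1 hCK
    have hle : K ⊔ C ≤ K := by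
      refine hmaxK _ ⟨connected_sup_of_mem hK.1 hC.1 hxK hxC, hK.2.sup hC.2⟩ ?_ le_sup_left
      exact Set.disjoint_union_right.2 ⟨hHK, hHC⟩
    have hCK' : C ≤ K := le_sup_right.trans hle
    exact ⟨hCK'.1 hvC, fun w hw => hCK'.2 (hadj v w hvC hw)⟩
  exact ⟨fun v hv => (key v hv).1, fun v w hvw => (key v hvw.fst_mem).2 w hvw⟩

/-- Two disjoint good subgraphs extend to two maximally standard subgraphs which are the
orthogonal complements of each other. -/
lemma exists_dual_pair {Γ : SimpleGraph V} (hconn : Γ.Connected) {H K : Γ.Subgraph}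
    (hH : IsGood H) (hK : IsGood K) (hHK : Disjoint H.verts K.verts) :
    ∃ H' K' : Γ.Subgraph, H ≤ H' ∧ K ≤ K' ∧ IsMaxStandard H' ∧ IsMaxStandard K' ∧
      Disjoint H'.verts K'.verts := by
  obtain ⟨⟨H', K'⟩, ⟨hHH', hKK'⟩, hmax⟩ := (Set.toFinite {P : Γ.Subgraph × Γ.Subgraph |
    IsGood P.1 ∧ IsGood P.2 ∧ Disjoint P.1.verts P.2.verts}).exists_le_maximal (a := (H, K))
    ⟨hH, hK, hHK⟩
  obtain ⟨hH', hK', hd⟩ := hmax.1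
  have hmaxH : ∀ P, IsGood P → Disjoint P.verts K'.verts → H' ≤ P → P ≤ H' := fun P h1 h2 h3 =>
    (hmax.2 (y := (P, K')) ⟨h1, hK', h2⟩ ⟨h3, le_rfl⟩).1
  have hmaxK : ∀ P, IsGood P → Disjoint H'.verts P.verts → K' ≤ P → P ≤ K' := fun P h1 h2 h3 =>
    (hmax.2 (y := (H', P)) ⟨hH', h1, h2⟩ ⟨le_rfl, h3⟩).2
  have e1 : orth H' = K' := orth_eq_of_maximal hconn hH' hK' hd hmaxH hmaxK
  have e2 : orth K' = H' := orth_eq_of_maximal hconn hK' hH' hd.symm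
    (fun P h1 h2 h3 => hmaxK P h1 h2.symm h3) (fun P h1 h2 h3 => hmaxH P h1 h2.symm h3)
  have s1 : IsStandard H' := isStandard_of_good hH' hK' hd
  have s2 : IsStandard K' := isStandard_of_good hK' hH' hd.symm
  refine ⟨H', K', hHH', hKK', ⟨s1, ?_, ?_⟩, ⟨s2, ?_, ?_⟩, hd⟩
  · rwa [e1]
  · rw [e1, e2]
  · rwa [e2]
  · rw [e2, e1]

lemma IsStandard.exists_maxStandard {Γ : SimpleGraph V} (hconn : Γ.Connected) {H : Γ.Subgraph}
    (hH : IsStandard H) : ∃ X : Γ.Subgraph, H ≤ X ∧ IsMaxStandard X := by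
  obtain ⟨K, hK, hd⟩ := hH.exists_disjoint
  obtain ⟨X, -, h1, -, h2, -⟩ := exists_dual_pair hconn hH.isGood hK hd
  exact ⟨X, h1, h2⟩

lemma IsMaxStandard.orth {Γ : SimpleGraph V} {X : Γ.Subgraph} (hX : IsMaxStandard X) :
    IsMaxStandard (orth X) := by
  refine ⟨hX.2.1, ?_, ?_⟩
  · rw [hX.2.2]
    exact hX.1
  · rw [hX.2.2]

/-! ### Graph of maximally standard subgraphs -/

/-- A maximally standard subgraph as a vertex of `M(Γ)`. -/
def maxVertex {Γ : SimpleGraph V} (X : Γ.Subgraph) (hX : IsMaxStandard X) :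
    {H : {H : Γ.Subgraph // IsStandard H} // IsMaxStandard H.1} :=
  ⟨⟨X, hX.1⟩, hX⟩

lemma maxStandardGraph_reachable {Γ : SimpleGraph V} {X Y : Γ.Subgraph} (hX : IsMaxStandard X)
    (hY : IsMaxStandard Y) (h : X ≤ Y ∨ Disjoint X.verts Y.verts) :
    (maxStandardGraph Γ).Reachable (maxVertex X hX) (maxVertex Y hY) := by
  by_cases hne : X = Y
  · subst hne
    exact SimpleGraph.Reachable.refl _
  · refine SimpleGraph.Adj.reachable ?_
    exact standardGraph_adj (H := ⟨X, hX.1⟩) (K := ⟨Y, hY.1⟩)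
      (fun h' => hne (congrArg Subtype.val h')) h

/-- Maximally standard subgraphs containing a common standard subgraph are joined in `M(Γ)`. -/
lemma maxStandardGraph_reachable_of_le {Γ : SimpleGraph V} (hconn : Γ.Connected)
    {H X Y : Γ.Subgraph} (hH : IsStandard H) (hX : IsMaxStandard X) (hY : IsMaxStandard Y)
    (hHX : H ≤ X) (hHY : H ≤ Y) :
    (maxStandardGraph Γ).Reachable (maxVertex X hX) (maxVertex Y hY) := by
  have h1 := maxStandardGraph_reachable hX hX.orth (Or.inr (disjoint_orth X))
  have h2 := maxStandardGraph_reachable hY hY.orth (Or.inr (disjoint_orth Y))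
  refine h1.trans (SimpleGraph.Reachable.trans ?_ h2.symm)
  by_cases hd : Disjoint (orth X).verts (orth Y).verts
  · exact maxStandardGraph_reachable _ _ (Or.inr hd)
  obtain ⟨v, hvX, hvY⟩ := Set.not_disjoint_iff.1 hd
  have hgood : IsGood (orth X ⊔ orth Y) :=
    ⟨connected_sup_of_mem hX.2.1.1 hY.2.1.1 hvX hvY, (isCore_orth X).sup (isCore_orth Y)⟩
  have hdis : Disjoint (orth X ⊔ orth Y).verts H.verts := by
    refine Set.disjoint_union_left.2 ⟨?_, ?_⟩
    · exact ((disjoint_orth X).mono_left hHX.1).symm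
    · exact ((disjoint_orth Y).mono_left hHY.1).symm
  obtain ⟨Z, hle, hZ⟩ :=
    (isStandard_of_good hgood hH.isGood hdis).exists_maxStandard hconn
  exact (maxStandardGraph_reachable hX.orth hZ (Or.inl (le_sup_left.trans hle))).trans
    (maxStandardGraph_reachable hY.orth hZ (Or.inl (le_sup_right.trans hle))).symm

lemma maxStandardGraph_preconnected_of_standardGraph {Γ : SimpleGraph V} (hconn : Γ.Connected)
    (h : (standardGraph Γ).Preconnected) : (maxStandardGraph Γ).Preconnected := by
  have key : ∀ H K, (standardGraph Γ).Reachable H K →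
      ∀ X Y (hX : IsMaxStandard X) (hY : IsMaxStandard Y), H.1 ≤ X → K.1 ≤ Y →
        (maxStandardGraph Γ).Reachable (maxVertex X hX) (maxVertex Y hY) := by
    rintro H K ⟨p⟩
    induction p with
    | @nil H =>
      exact fun X Y hX hY h1 h2 => maxStandardGraph_reachable_of_le hconn H.2 hX hY h1 h2
    | @cons H L K hadj _ ih =>
      intro X Y hX hY hHX hKY
      rcases nested_or_disjoint_of_adj hadj with hHL | hLH | hdis
      · obtain ⟨Z, hLZ, hZ⟩ := L.2.exists_maxStandard hconn
        exact (maxStandardGraph_reachable_of_le hconn H.2 hX hZ hHX (hHL.trans hLZ)).trans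
          (ih Z Y hZ hY hLZ hKY)
      · exact ih X Y hX hY (hLH.trans hHX) hKY
      · obtain ⟨H', L', hH', hL', mH, mL, hd⟩ :=
          exists_dual_pair hconn H.2.isGood L.2.isGood hdis
        exact ((maxStandardGraph_reachable_of_le hconn H.2 hX mH hHX hH').trans
          (maxStandardGraph_reachable mH mL (Or.inr hd))).trans (ih L' Y mL hY hL' hKY)
  rintro ⟨X, hX⟩ ⟨Y, hY⟩
  exact key X Y (h _ _) X.1 Y.1 hX hY le_rfl le_rfl

lemma standardGraph_preconnected_of_maxStandardGraph {Γ : SimpleGraph V} (hconn : Γ.Connected)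
    (h : (maxStandardGraph Γ).Preconnected) : (standardGraph Γ).Preconnected := by
  intro H K
  obtain ⟨X, hHX, hX⟩ := H.2.exists_maxStandard hconn
  obtain ⟨Y, hKY, hY⟩ := K.2.exists_maxStandard hconn
  have h1 : (standardGraph Γ).Reachable H ⟨X, hX.1⟩ := standardGraph_reachable (Or.inl hHX)
  have h2 : (standardGraph Γ).Reachable K ⟨Y, hY.1⟩ := standardGraph_reachable (Or.inl hKY)
  have h3 : (standardGraph Γ).Reachable ⟨X, hX.1⟩ ⟨Y, hY.1⟩ :=
    (h (maxVertex X hX) (maxVertex Y hY)).map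
      (SimpleGraph.Embedding.induce
        {H : {H : Γ.Subgraph // IsStandard H} | IsMaxStandard H.1}).toHom
  exact (h1.trans h3).trans h2.symm

/-- For a finite connected simple graph `Γ`, the curve graph `C(Γ)`, the
graph of standard subgraphs `S(Γ)` and the graph of maximally standard subgraphs `M(Γ)` are
simultaneously connected (in the sense of `Preconnected`, so that the empty graph counts as
connected). -/
theorem curveGraph_standardGraph_maxStandardGraph_connected_tfae
    (V : Type) [Fintype V] [DecidableEq V] (Γ : SimpleGraph V) (hconn : Γ.Connected) :
    ((curveGraph Γ).Preconnected ↔ (standardGraph Γ).Preconnected) ∧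
    ((standardGraph Γ).Preconnected ↔ (maxStandardGraph Γ).Preconnected) := by
  exact ⟨⟨standardGraph_preconnected_of_curveGraph, curveGraph_preconnected_of_standardGraph⟩,
    ⟨maxStandardGraph_preconnected_of_standardGraph hconn,
      standardGraph_preconnected_of_maxStandardGraph hconn⟩⟩

end GraphBraid
end
end

section
/- Let Γ = (T, ℓ) be a normal bunch of grapes (with ℓ(v) ≥ 1 at every degree-2 vertex of T). For an edge t of T, let M(t) be the set of all unordered pairs {x, y} of distinct vertices of Γ with x a vertex of Γ_{t,1} and y a vertex of Γ_{t,2}. Then for any edges t₁, …, t_m of T (m ≥ 1): the intersection ⋂_{i=1}^m M(t_i) is nonempty if and only if t₁, …, t_m are colinear; and in that case, letting P be the shortest path in T containing all the t_i, the intersection equals the set of all unordered pairs {x, y} with x a vertex of Γ_{P,1} and y a vertex of Γ_{P,2}, where Γ_{P,1}, Γ_{P,2} are the P-components of Γ. -/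
/-!
In a tree, a path from `u` to `v` uses an edge exactly when deleting that edge separates `u` from
`v` (`mem_edges_iff_not_reachable`). Hence `{x, y} ∈ M(t)` iff `t` lies on the path joining the stem
vertices of `x` and `y` (`mem_Mset_iff`), so `⋂ M(tᵢ)` is nonempty iff the `tᵢ` are colinear.

Let `p` be a shortest path containing all `tᵢ`, from `a` to `b`, and let `q` join the stem vertices
of `x` and `y`. If `q` contains all `tᵢ`, minimality of `p` forces `a` and `b` to lie on `q`
(`start_mem_support`): otherwise the first or last edge of `p` could be dropped. By uniqueness of
paths, `q` runs through `p` or its reverse, and the two remaining pieces of `q` avoid the edges of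
`p` (`reachable_of_append`), placing `x` and `y` in opposite `p`-components. Conversely, if `x` and
`y` lie in opposite `p`-components and some `tᵢ` were not on `q`, then `a` and `b` would be connected
without `tᵢ`, although `tᵢ` lies on `p`.
-/

open scoped Classical

noncomputable section

namespace GraphBraid

/-- The vertex type of a bunch of grapes over a stem with vertex type `VT`:
the stem vertices together with, for each vertex `v` and each of the `ℓ v` grapes at `v`,
two new vertices completing a triangle at `v`. -/
def GrapeVert (VT : Type) (ℓ : VT → ℕ) : Type :=
  VT ⊕ (Σ v : VT, Fin (ℓ v) × Fin 2)

instance (VT : Type) [Fintype VT] [DecidableEq VT] (ℓ : VT → ℕ) : Fintype (GrapeVert VT ℓ) := by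
  unfold GrapeVert; infer_instance

instance (VT : Type) [DecidableEq VT] (ℓ : VT → ℕ) : DecidableEq (GrapeVert VT ℓ) := by
  unfold GrapeVert; infer_instance

/-- The stem vertex underlying a vertex of the bunch of grapes. -/
def stemOf {VT : Type} {ℓ : VT → ℕ} : GrapeVert VT ℓ → VT :=
  Sum.elim id (fun p => p.1)

/-- The bunch of grapes `Γ = (T, ℓ)`: the graph obtained from the stem `T` by attaching
`ℓ v` triangles (grapes) at each vertex `v` of `T`. -/
def bunchOfGrapes {VT : Type} (T : SimpleGraph VT) (ℓ : VT → ℕ) :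
    SimpleGraph (GrapeVert VT ℓ) :=
  SimpleGraph.fromEdgeSet
    ({e | ∃ u v : VT, T.Adj u v ∧ e = s(Sum.inl u, Sum.inl v)} ∪
     {e | ∃ (v : VT) (i : Fin (ℓ v)) (j : Fin 2), e = s(Sum.inl v, Sum.inr ⟨v, (i, j)⟩)} ∪
     {e | ∃ (v : VT) (i : Fin (ℓ v)), e = s(Sum.inr ⟨v, (i, 0)⟩, Sum.inr ⟨v, (i, 1)⟩)})

/-- A bunch of grapes is normal when at least two distinct stem vertices carry a grape and
every leaf of the stem carries a grape; following the standing assumption, every degree-2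
stem vertex also carries a grape.  The stem is required to be a finite tree. -/
def IsNormalGrapes {VT : Type} (T : SimpleGraph VT) (ℓ : VT → ℕ) : Prop :=
  T.IsTree ∧
  (∃ v w : VT, v ≠ w ∧ 1 ≤ ℓ v ∧ 1 ≤ ℓ w) ∧
  (∀ v : VT, (T.neighborSet v).ncard = 1 → 1 ≤ ℓ v) ∧
  (∀ v : VT, (T.neighborSet v).ncard = 2 → 1 ≤ ℓ v)

/-- Membership in the side of the edge `{a,b}` of the stem containing `a`: a vertex of the
bunch of grapes lies in the `t`-component `Γ_{t,1}` (for `t = {a,b}`) when its stem vertex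
is reachable from `a` after deleting the edge `{a,b}` from `T`. -/
def inSide {VT : Type} (T : SimpleGraph VT) (ℓ : VT → ℕ) (a b : VT)
    (x : GrapeVert VT ℓ) : Prop :=
  (T.deleteEdges {s(a, b)}).Reachable a (stemOf x)



/-- The set `M(t)` associated to the stem edge `t = {a,b}`: all unordered pairs of distinct
vertices of the bunch of grapes with one member in the `a`-side component `Γ_{t,1}` and the
other in the `b`-side component `Γ_{t,2}`. -/
def Mset {VT : Type} (T : SimpleGraph VT) (ℓ : VT → ℕ) (a b : VT) :
    Set (Sym2 (GrapeVert VT ℓ)) :=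
  {p | ∃ x y : GrapeVert VT ℓ, x ≠ y ∧ inSide T ℓ a b x ∧ inSide T ℓ b a y ∧ p = s(x, y)}

/-- Membership in the side of a path `p` of the stem containing the stem vertex `w`:
reachability from `w` after deleting all edges of `p` from `T`. -/
def inSideWalk {VT : Type} (T : SimpleGraph VT) (ℓ : VT → ℕ) {u v : VT}
    (p : T.Walk u v) (w : VT) (x : GrapeVert VT ℓ) : Prop :=
  (T.deleteEdges {e | e ∈ p.edges}).Reachable w (stemOf x)

/-- A path in a tree uses an edge iff deleting that edge disconnects its endpoints. -/
lemma mem_edges_iff_not_reachable {V : Type} {T : SimpleGraph V} (hT : T.IsTree) {u v : V}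
    {q : T.Walk u v} (hq : q.IsPath) (e : Sym2 V) :
    e ∈ q.edges ↔ ¬ (T.deleteEdges {e}).Reachable u v := by
  constructor
  · intro he hr
    obtain ⟨r, hr⟩ := hr.exists_isPath
    have h1 : (r.mapLe (T.deleteEdges_le {e})).IsPath := hr.mapLe _
    have h2 : r.mapLe (T.deleteEdges_le {e}) = q :=
      (hT.existsUnique_path u v).unique h1 hq
    rw [← h2, SimpleGraph.Walk.edges_mapLe_eq_edges] at he
    have := r.edges_subset_edgeSet he
    simp [SimpleGraph.edgeSet_deleteEdges] at this
  · intro h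
    by_contra he
    exact h ⟨q.toDeleteEdges {e} (fun e' h1 h2 => he (h2 ▸ h1))⟩

/-- Every vertex of a connected graph with one edge deleted is joined to an end of that edge. -/
lemma reachable_end {V : Type} {T : SimpleGraph V} (hT : T.Connected) (a b w : V) :
    (T.deleteEdges {s(a, b)}).Reachable a w ∨ (T.deleteEdges {s(a, b)}).Reachable b w := by
  obtain ⟨r⟩ := hT.preconnected w a
  induction r with
  | nil => exact Or.inl (SimpleGraph.Reachable.refl _)
  | @cons u v c h r ih =>
    by_cases he : s(u, v) = s(c, b)
    · rcases Sym2.eq_iff.1 he with ⟨rfl, rfl⟩ | ⟨rfl, rfl⟩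
      · exact Or.inl (SimpleGraph.Reachable.refl _)
      · exact Or.inr (SimpleGraph.Reachable.refl _)
    · have hadj : (T.deleteEdges {s(c, b)}).Adj v u := by
        rw [SimpleGraph.deleteEdges_adj]
        exact ⟨h.symm, fun k => he (Sym2.eq_swap.trans k)⟩
      exact ih.imp (fun k => k.trans hadj.reachable) (fun k => k.trans hadj.reachable)

/-- A pair lies in `M(t)` iff `t` lies on the path between the underlying stem vertices. -/
lemma mem_Mset_iff {V : Type} {T : SimpleGraph V} (ℓ : V → ℕ) (hT : T.IsTree) {a b : V}
    (hab : T.Adj a b) (x y : GrapeVert V ℓ) {q : T.Walk (stemOf x) (stemOf y)} (hq : q.IsPath) :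
    s(x, y) ∈ Mset T ℓ a b ↔ s(a, b) ∈ q.edges := by
  rw [mem_edges_iff_not_reachable hT hq]
  have hbr : ¬ (T.deleteEdges {s(a, b)}).Reachable a b := by
    have hp : (SimpleGraph.Walk.cons hab .nil).IsPath := by simp [hab.ne]
    exact (mem_edges_iff_not_reachable hT hp _).1 (by simp)
  constructor
  · rintro ⟨x', y', -, hx, hy, he⟩ hr
    unfold inSide at hx hy
    rw [Sym2.eq_swap (a := b)] at hy
    rcases Sym2.eq_iff.1 he with ⟨rfl, rfl⟩ | ⟨rfl, rfl⟩
    · exact hbr (hx.trans (hr.trans hy.symm))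
    · exact hbr (hx.trans (hr.symm.trans hy.symm))
  · intro h
    have hne : x ≠ y := by
      rintro rfl
      exact h (SimpleGraph.Reachable.refl _)
    have hsw : s(b, a) = s(a, b) := Sym2.eq_swap
    rcases reachable_end hT.connected a b (stemOf x) with hx | hx <;>
      rcases reachable_end hT.connected a b (stemOf y) with hy | hy
    · exact absurd (hx.symm.trans hy) h
    · exact ⟨x, y, hne, hx, by unfold inSide; rwa [hsw], rfl⟩
    · exact ⟨y, x, hne.symm, hy, by unfold inSide; rwa [hsw], Sym2.eq_swap⟩
    · exact absurd (hx.symm.trans hy) h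

/-- If a shortest path `p` containing the edges `e i` starts off a walk `q` that also contains
them, its first edge is none of the `e i` and can be dropped. -/
lemma start_mem_support {V ι : Type} {T : SimpleGraph V} (i₀ : ι) (e : ι → Sym2 V)
    {a b u v : V} (p : T.Walk a b) (hp : p.IsPath) (hpe : ∀ i, e i ∈ p.edges)
    (hmin : ∀ (a' b' : V) (r : T.Walk a' b'), r.IsPath → (∀ i, e i ∈ r.edges) →
      p.length ≤ r.length)
    (q : T.Walk u v) (hqe : ∀ i, e i ∈ q.edges) : a ∈ q.support := by
  by_contra ha
  cases p with
  | nil => simpa using hpe i₀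
  | @cons _ c _ h p' =>
    have := hmin _ _ p' hp.of_cons (fun i => by
      rcases List.mem_cons.1 (SimpleGraph.Walk.edges_cons h p' ▸ hpe i) with h1 | h1
      · exact absurd (q.fst_mem_support_of_mem_edges (h1 ▸ hqe i)) ha
      · exact h1)
    simp at this

/-- The end pieces of a trail running through `p` avoid the edges of `p`. -/
lemma reachable_of_append {V : Type} {T : SimpleGraph V} {a b u v : V} (r₁ : T.Walk u a)
    (p : T.Walk a b) (r₂ : T.Walk b v) (h : (r₁.append (p.append r₂)).IsTrail) :
    (T.deleteEdges {e | e ∈ p.edges}).Reachable a u ∧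
      (T.deleteEdges {e | e ∈ p.edges}).Reachable b v := by
  have hn := h.edges_nodup
  simp only [SimpleGraph.Walk.edges_append, List.nodup_append, List.mem_append] at hn
  obtain ⟨-, ⟨-, -, h2⟩, h1⟩ := hn
  constructor
  · exact (SimpleGraph.Walk.reachable (r₁.toDeleteEdges _
      (fun e he hep => h1 e he e (Or.inl hep) rfl))).symm
  · exact ⟨r₂.toDeleteEdges _ (fun e he hep => h2 e hep e he rfl)⟩

/-- In a tree, a path visiting both ends of a path `p` runs through `p` in one direction or the
other, so its ends are separated by `p`. -/
lemma sides_of_mem_support {V : Type} {T : SimpleGraph V} (hT : T.IsTree) {a b u v : V}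
    {p : T.Walk a b} (hp : p.IsPath) {q : T.Walk u v} (hq : q.IsPath)
    (ha : a ∈ q.support) (hb : b ∈ q.support) :
    ((T.deleteEdges {e | e ∈ p.edges}).Reachable a u ∧
      (T.deleteEdges {e | e ∈ p.edges}).Reachable b v) ∨
    ((T.deleteEdges {e | e ∈ p.edges}).Reachable b u ∧
      (T.deleteEdges {e | e ∈ p.edges}).Reachable a v) := by
  have hspec := q.take_spec ha
  rw [← hspec, SimpleGraph.Walk.mem_support_append_iff] at hb
  rcases hb with hb | hb
  · right
    have hmid : (q.takeUntil a ha).dropUntil b hb = p.reverse :=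
      (hT.existsUnique_path b a).unique ((hq.takeUntil ha).dropUntil hb) hp.reverse
    have hs2 := (q.takeUntil a ha).take_spec hb
    rw [hmid] at hs2
    rw [← hs2, ← SimpleGraph.Walk.append_assoc] at hspec
    have := reachable_of_append _ p.reverse _ (hspec ▸ hq.isTrail)
    simpa using this
  · left
    have hmid : (q.dropUntil a ha).takeUntil b hb = p :=
      (hT.existsUnique_path a b).unique ((hq.dropUntil ha).takeUntil hb) hp
    have hs2 := (q.dropUntil a ha).take_spec hb
    rw [hmid] at hs2
    rw [← hs2] at hspec
    exact reachable_of_append _ p _ (hspec ▸ hq.isTrail)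

/-- Vertices in opposite `p`-components are joined by a path containing every edge of `p`. -/
lemma mem_edges_of_sides {V : Type} {T : SimpleGraph V} (hT : T.IsTree) {a b u v : V}
    {p : T.Walk a b} (hp : p.IsPath) {q : T.Walk u v} (hq : q.IsPath)
    (hu : (T.deleteEdges {e | e ∈ p.edges}).Reachable a u)
    (hv : (T.deleteEdges {e | e ∈ p.edges}).Reachable b v) {e : Sym2 V} (he : e ∈ p.edges) :
    e ∈ q.edges := by
  rw [mem_edges_iff_not_reachable hT hq]
  intro hr
  have hle : T.deleteEdges {e | e ∈ p.edges} ≤ T.deleteEdges {e} :=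
    SimpleGraph.deleteEdges_anti (by simpa using he)
  exact (mem_edges_iff_not_reachable hT hp e).1 he
    ((hu.mono hle).trans (hr.trans (hv.mono hle).symm))

/-- For a normal bunch of grapes and stem edges `t₁, …, t_m` (`m ≥ 1`,
given by adjacent pairs of stem vertices), the intersection `⋂ M(tᵢ)` is nonempty iff the
edges are colinear, and then for the shortest path `P` of the stem containing all of them,
the intersection is the set of unordered pairs with one member in each `P`-component. -/
theorem grapes_Mset_intersection
    (VT : Type) [Fintype VT] [DecidableEq VT] (T : SimpleGraph VT) (ℓ : VT → ℕ)
    (hnorm : IsNormalGrapes T ℓ)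
    (m : ℕ) (hm : 1 ≤ m) (t : Fin m → VT × VT)
    (ht : ∀ i, T.Adj (t i).1 (t i).2) :
    ((⋂ i : Fin m, Mset T ℓ (t i).1 (t i).2).Nonempty ↔
      ∃ (a b : VT) (p : T.Walk a b), p.IsPath ∧
        ∀ i : Fin m, s((t i).1, (t i).2) ∈ p.edges) ∧
    (∀ (a b : VT) (p : T.Walk a b), p.IsPath →
      (∀ i : Fin m, s((t i).1, (t i).2) ∈ p.edges) →
      (∀ (a' b' : VT) (q : T.Walk a' b'), q.IsPath →
        (∀ i : Fin m, s((t i).1, (t i).2) ∈ q.edges) → p.length ≤ q.length) →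
      (⋂ i : Fin m, Mset T ℓ (t i).1 (t i).2) =
        {pr : Sym2 (GrapeVert VT ℓ) | ∃ x y : GrapeVert VT ℓ, x ≠ y ∧
          inSideWalk T ℓ p a x ∧ inSideWalk T ℓ p b y ∧ pr = s(x, y)}) := by
  obtain ⟨hT, -⟩ := hnorm
  have hpath : ∀ u v : VT, ∃ q : T.Walk u v, q.IsPath :=
    fun u v => (hT.existsUnique_path u v).exists
  have hmem : ∀ (x y : GrapeVert VT ℓ) (q : T.Walk (stemOf x) (stemOf y)), q.IsPath →
      (s(x, y) ∈ (⋂ i : Fin m, Mset T ℓ (t i).1 (t i).2) ↔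
        ∀ i : Fin m, s((t i).1, (t i).2) ∈ q.edges) := by
    intro x y q hq
    rw [Set.mem_iInter]
    exact forall_congr' fun i => mem_Mset_iff ℓ hT (ht i) x y hq
  refine ⟨⟨?_, ?_⟩, ?_⟩
  · rintro ⟨pr, hpr⟩
    induction pr using Sym2.ind with
    | _ x y =>
      obtain ⟨q, hq⟩ := hpath (stemOf x) (stemOf y)
      exact ⟨_, _, q, hq, (hmem x y q hq).1 hpr⟩
  · rintro ⟨a, b, p, hp, hpe⟩
    exact ⟨s(Sum.inl a, Sum.inl b), (hmem (Sum.inl a) (Sum.inl b) p hp).2 hpe⟩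
  · intro a b p hp hpe hmin
    ext pr
    induction pr using Sym2.ind with
    | _ x y =>
      obtain ⟨q, hq⟩ := hpath (stemOf x) (stemOf y)
      constructor
      · intro h
        have hqe := (hmem x y q hq).1 h
        have hne : x ≠ y := by
          rintro rfl
          exact (mem_edges_iff_not_reachable hT hq _).1 (hqe ⟨0, hm⟩)
            (SimpleGraph.Reachable.refl _)
        have ha := start_mem_support (⟨0, hm⟩ : Fin m) (fun i => s((t i).1, (t i).2)) p hp hpe
          hmin q hqe
        have hb := start_mem_support (⟨0, hm⟩ : Fin m) (fun i => s((t i).1, (t i).2))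
          p.reverse hp.reverse (by simpa using hpe) (by simpa using hmin) q hqe
        rcases sides_of_mem_support hT hp hq ha hb with ⟨h1, h2⟩ | ⟨h1, h2⟩
        · exact ⟨x, y, hne, h1, h2, rfl⟩
        · exact ⟨y, x, hne.symm, h2, h1, Sym2.eq_swap⟩
      · rintro ⟨x', y', -, hx, hy, he⟩
        rw [he]
        obtain ⟨q', hq'⟩ := hpath (stemOf x') (stemOf y')
        exact (hmem x' y' q' hq').2 fun i => mem_edges_of_sides hT hp hq' hx hy (hpe i)

end GraphBraid
end
end

section
/- Let Γ be a finite simple graph, let Γ₁ be a leafless subgraph of Γ, and let H be a subgraph of Γ that is leafless, has no isolated vertices, and is vertex-disjoint from Γ₁. Then H is a subgraph of the orthogonal complement Γ₁^⊥ (that is, the iterated pruning of degree-≤1 vertices that defines Γ₁^⊥ removes no vertex or edge of H). -/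
/-!
A leafless subgraph `H` without isolated vertices has all its degrees at least two. Degrees only
grow when passing to a larger subgraph, so whenever `H ≤ K`, no vertex of `H` has degree at most
one in `K`, and hence `H` survives a pruning step (`le_pruneStep`). Vertex-disjointness from `Γ₁`
says that `H` lies in the induced subgraph on the complement of `Γ₁`, and induction on the number
of pruning steps gives `H ≤ Γ₁^⊥`.
-/

open scoped Classical

noncomputable section

namespace GraphBraid

variable {V : Type} [Fintype V] [DecidableEq V]

theorem le_deleteVerts_of_disjoint {W : Type*} {G : SimpleGraph W} {H K : G.Subgraph}
    {s : Set W} (hHK : H ≤ K) (hs : Disjoint H.verts s) : H ≤ K.deleteVerts s := by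
  have hns : ∀ v ∈ H.verts, v ∉ s := fun v hv => Set.disjoint_left.mp hs hv
  refine ⟨fun v hv => ⟨hHK.1 hv, hns v hv⟩, fun v w hvw => ?_⟩
  rw [SimpleGraph.Subgraph.deleteVerts_adj]
  exact ⟨hHK.1 hvw.fst_mem, hns v hvw.fst_mem, hHK.1 hvw.snd_mem, hns w hvw.snd_mem, hHK.2 hvw⟩

/-- Pruning a subgraph `K` containing `H` removes nothing of `H`, because every vertex of `H` has
degree at least two already in `H`. -/
theorem le_pruneStep {Γ : SimpleGraph V} {H K : Γ.Subgraph} (hH : IsLeafless H)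
    (hiso : ∀ v ∈ H.verts, ∃ w, H.Adj v w) (hHK : H ≤ K) : H ≤ pruneStep K := by
  refine le_deleteVerts_of_disjoint hHK (Set.disjoint_left.mpr fun v hv hle => ?_)
  have hpos : 0 < (H.neighborSet v).ncard := (Set.ncard_pos (Set.toFinite _)).mpr (hiso v hv)
  have hmono : (H.neighborSet v).ncard ≤ (K.neighborSet v).ncard :=
    Set.ncard_le_ncard (fun w hw => hHK.2 hw) (Set.toFinite _)
  have hne := hH v hv
  have hle' : (K.neighborSet v).ncard ≤ 1 := hle
  omega

/-- If `Γ₁` is a leafless subgraph of a finite simple graph `Γ` and `H`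
is a leafless subgraph without isolated vertices which is vertex-disjoint from `Γ₁`, then
`H` is a subgraph of the orthogonal complement `Γ₁^⊥`. -/
theorem leafless_disjoint_subgraph_le_orth
    (V : Type) [Fintype V] [DecidableEq V] (Γ : SimpleGraph V)
    (Γ₁ : Γ.Subgraph) (h₁ : IsLeafless Γ₁)
    (H : Γ.Subgraph) (hH : IsLeafless H)
    (hiso : ∀ v ∈ H.verts, ∃ w, H.Adj v w)
    (hdisj : Disjoint H.verts Γ₁.verts) :
    H ≤ orth Γ₁ := by
  have iter : ∀ n : ℕ, H ≤ pruneStep^[n] ((⊤ : Γ.Subgraph).deleteVerts Γ₁.verts) := by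
    intro n
    induction n with
    | zero => exact le_deleteVerts_of_disjoint le_top hdisj
    | succ n ih =>
      rw [Function.iterate_succ_apply']
      exact le_pruneStep hH hiso ih
  exact iter (Fintype.card V)

end GraphBraid
end
end

section
/- Let Γ be a finite connected simple graph and let A and B be maximally standard subgraphs of Γ. Then there exist distinct vertices x, y of Γ such that: (x is a vertex of A and y is a vertex of A^⊥, or y is a vertex of A and x is a vertex of A^⊥), and (x is a vertex of B and y is a vertex of B^⊥, or y is a vertex of B and x is a vertex of B^⊥). Equivalently, the sets of unordered vertex-pairs {{x,y} : x ∈ V(A), y ∈ V(A^⊥)} and {{x,y} : x ∈ V(B), y ∈ V(B^⊥)} have nonempty intersection. -/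
/-!
Only two properties of the orthogonal complement are used. The subgraphs `H` and `orth H` are
vertex-disjoint, and a leafless subgraph `H` with an edge always meets `K ∪ orth K`
(`exists_mem_verts_or_mem_orth`): if `H` misses `K`, then `H` lies in the complement of `K`, and
no edge of `H` is ever removed by pruning, because its endpoints have degree at least two
already inside `H`.

Record the nonemptiness of the four intersections of `A`, `orth A` with `B`, `orth B` in a
`2 × 2` table. Applying the second property to `A`, `orth A` against `B` and to `B`, `orth B`
against `A` shows that every row and every column of the table has a nonempty entry, so the
diagonal or the antidiagonal consists of two nonempty intersections. One vertex chosen from each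
of these two intersections gives the pair, and the first property makes the vertices distinct.
-/

open scoped Classical

noncomputable section

namespace GraphBraid

variable {V : Type} [Fintype V] [DecidableEq V]

/-- Edges of a leafless subgraph survive any number of pruning steps applied to a subgraph
containing them. -/
lemma adj_iterate_pruneStep {Γ : SimpleGraph V} {H K : Γ.Subgraph} (hH : IsLeafless H)
    (hHK : ∀ u v, H.Adj u v → K.Adj u v) (n : ℕ) :
    ∀ u v, H.Adj u v → (pruneStep^[n] K).Adj u v := by
  induction n with
  | zero => simpa using hHK
  | succ n ih =>
    have key : ∀ u v, H.Adj u v → ¬ ((pruneStep^[n] K).neighborSet u).ncard ≤ 1 := by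
      intro u v huv hle
      have hsub : H.neighborSet u ⊆ (pruneStep^[n] K).neighborSet u := fun w hw => ih u w hw
      have hcard := Set.ncard_le_ncard hsub (Set.toFinite _)
      have hpos : 0 < (H.neighborSet u).ncard :=
        (Set.ncard_pos (Set.toFinite _)).2 ⟨v, huv⟩
      have hne := hH u huv.fst_mem
      omega
    intro u v huv
    rw [Function.iterate_succ_apply', pruneStep, SimpleGraph.Subgraph.deleteVerts_adj]
    exact ⟨(ih u v huv).fst_mem, key u v huv, (ih u v huv).snd_mem, key v u huv.symm,
      ih u v huv⟩

/-- A leafless subgraph with an edge meets `K` or `orth K`. -/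
lemma exists_mem_verts_or_mem_orth {Γ : SimpleGraph V} {H : Γ.Subgraph} (K : Γ.Subgraph)
    (hH : IsLeafless H) (hE : H.edgeSet.Nonempty) :
    ∃ v ∈ H.verts, v ∈ K.verts ∨ v ∈ (orth K).verts := by
  by_contra! hcon
  obtain ⟨e, he⟩ := hE
  induction e with
  | _ u v =>
    have huv : H.Adj u v := he
    refine (hcon u huv.fst_mem).2 (adj_iterate_pruneStep hH ?_ _ u v huv).fst_mem
    intro a b hab
    rw [SimpleGraph.Subgraph.deleteVerts_adj]
    exact ⟨trivial, (hcon a hab.fst_mem).1, trivial, (hcon b hab.snd_mem).1, hab.adj_sub⟩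

lemma iterate_pruneStep_le {Γ : SimpleGraph V} (K : Γ.Subgraph) (n : ℕ) :
    pruneStep^[n] K ≤ K := by
  induction n with
  | zero => exact le_rfl
  | succ n ih =>
    rw [Function.iterate_succ_apply']
    exact SimpleGraph.Subgraph.deleteVerts_le.trans ih

lemma notMem_verts_of_mem_orth {Γ : SimpleGraph V} {K : Γ.Subgraph} {v : V}
    (hv : v ∈ (orth K).verts) : v ∉ K.verts :=
  ((iterate_pruneStep_le _ _).1 hv).2

/-- For maximally standard subgraphs `A` and `B` of a finite connected
simple graph `Γ`, there are distinct vertices `x`, `y` such that `{x,y}` splits with one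
vertex in `A` and the other in `A^⊥`, and also with one vertex in `B` and the other in
`B^⊥`. -/
theorem maxStandard_pair_sets_intersect
    (V : Type) [Fintype V] [DecidableEq V] (Γ : SimpleGraph V) (hconn : Γ.Connected)
    (A B : Γ.Subgraph) (hA : IsMaxStandard A) (hB : IsMaxStandard B) :
    ∃ x y : V, x ≠ y ∧
      ((x ∈ A.verts ∧ y ∈ (orth A).verts) ∨ (y ∈ A.verts ∧ x ∈ (orth A).verts)) ∧
      ((x ∈ B.verts ∧ y ∈ (orth B).verts) ∨ (y ∈ B.verts ∧ x ∈ (orth B).verts)) := by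
  obtain ⟨⟨-, eA, lA, -⟩, ⟨-, eA', lA', -⟩, -⟩ := hA
  obtain ⟨⟨-, eB, lB, -⟩, ⟨-, eB', lB', -⟩, -⟩ := hB
  obtain ⟨a, ha, ha'⟩ := exists_mem_verts_or_mem_orth B lA eA
  obtain ⟨b, hb, hb'⟩ := exists_mem_verts_or_mem_orth B lA' eA'
  obtain ⟨c, hc, hc'⟩ := exists_mem_verts_or_mem_orth A lB eB
  obtain ⟨d, hd, hd'⟩ := exists_mem_verts_or_mem_orth A lB' eB'
  have distinct : ∀ x y, x ∈ A.verts → y ∈ (orth A).verts → x ≠ y := by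
    rintro x y hx hy rfl
    exact notMem_verts_of_mem_orth hy hx
  -- If `a` and `b` fall on the same side of `B`, the vertex of `B ∪ orth B` on the other side
  -- (`c` or `d`) completes the pair.
  rcases ha' with ha' | ha' <;> rcases hb' with hb' | hb'
  · rcases hd' with hd' | hd'
    · exact ⟨d, b, distinct d b hd' hb, Or.inl ⟨hd', hb⟩, Or.inr ⟨hb', hd⟩⟩
    · exact ⟨a, d, distinct a d ha hd', Or.inl ⟨ha, hd'⟩, Or.inl ⟨ha', hd⟩⟩
  · exact ⟨a, b, distinct a b ha hb, Or.inl ⟨ha, hb⟩, Or.inl ⟨ha', hb'⟩⟩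
  · exact ⟨a, b, distinct a b ha hb, Or.inl ⟨ha, hb⟩, Or.inr ⟨hb', ha'⟩⟩
  · rcases hc' with hc' | hc'
    · exact ⟨c, b, distinct c b hc' hb, Or.inl ⟨hc', hb⟩, Or.inl ⟨hc, hb'⟩⟩
    · exact ⟨a, c, distinct a c ha hc', Or.inl ⟨ha, hc'⟩, Or.inr ⟨hc, ha'⟩⟩

end GraphBraid
end
end

section
/- Let Γ be a finite connected simple graph that is leafless (no vertex of degree 1) and contains two vertex-disjoint cycle subgraphs. If every pair of vertex-disjoint edges of Γ is separable, then no 3-cycle of Γ contains a vertex of degree 2 (degree computed in Γ). -/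
/-!
Let `v`, `a`, `b` span a triangle of `Γ` with `v` of degree 2, so that `a` and `b` are the only
neighbours of `v`.  If `a` had a neighbour `c` outside the triangle, the edges `ac` and `vb` would
be vertex-disjoint, hence contained in disjoint leafless subgraphs `G₁` and `G₂`; but `a` lies in
`G₁`, so `b` is the only neighbour of `v` in `G₂`, and `v` is a leaf of `G₂`
(`mem_of_adj_of_bivalent`).  By symmetry `b` has no neighbour outside the triangle either, so by
connectedness `Γ` has only three vertices.  This leaves no room for two disjoint cycles, each of
which has at least three vertices (`IsCycleSubgraph.three_le_ncard_verts`).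
-/

open scoped Classical

noncomputable section

namespace GraphBraid

variable {V : Type} [Fintype V] [DecidableEq V]

/-- A vertex of a cycle together with its two neighbours makes three vertices. -/
theorem IsCycleSubgraph.three_le_ncard_verts {Γ : SimpleGraph V} {C : Γ.Subgraph}
    (hC : IsCycleSubgraph C) : 3 ≤ C.verts.ncard := by
  obtain ⟨-, hconn, hdeg⟩ := hC
  obtain ⟨x, hx⟩ := hconn.nonempty
  have hsub : insert x (C.neighborSet x) ⊆ C.verts :=
    Set.insert_subset hx (C.neighborSet_subset_verts x)
  have hnot : x ∉ C.neighborSet x := fun h => C.loopless.irrefl x h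
  have hcard := Set.ncard_le_ncard hsub (Set.toFinite _)
  rw [Set.ncard_insert_of_notMem hnot (Set.toFinite _), hdeg x hx] at hcard
  exact hcard

/-- If the only neighbours of `v` are `a` and `b`, then separability of disjoint edges confines
the neighbours of `a` to `{v, b}`: an edge `ac` with any other `c` could not be separated
from `vb`. -/
theorem mem_of_adj_of_bivalent {Γ : SimpleGraph V}
    (hsep : ∀ (a b c d : V) (h₁ : Γ.Adj a b) (h₂ : Γ.Adj c d),
      Disjoint ({a, b} : Set V) ({c, d} : Set V) →
      Separable (Γ.subgraphOfAdj h₁) (Γ.subgraphOfAdj h₂))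
    {v a b c : V} (hab : a ≠ b) (hv : Γ.neighborSet v = {a, b}) (hac : Γ.Adj a c) :
    c = v ∨ c = b := by
  by_contra! hc
  have hva : Γ.Adj v a := by
    rw [← SimpleGraph.mem_neighborSet, hv]; simp
  have hvb : Γ.Adj v b := by
    rw [← SimpleGraph.mem_neighborSet, hv]; simp
  have hdisj : Disjoint ({a, c} : Set V) ({v, b} : Set V) := by
    simp [hva.ne, hab.symm, hc.1.symm, hc.2.symm]
  obtain ⟨G₁, G₂, -, hG₂, hG, h₁, h₂⟩ := hsep a c v b hac hvb hdisj
  have haG₁ : a ∈ G₁.verts := h₁.1 (by simp)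
  have hvG₂ : v ∈ G₂.verts := h₂.1 (by simp)
  have hvbG₂ : G₂.Adj v b := h₂.2 (by simp)
  apply hG₂ v hvG₂
  rw [Set.ncard_eq_one]
  refine ⟨b, Set.Subset.antisymm (fun x hx => ?_) (Set.singleton_subset_iff.2 hvbG₂)⟩
  have hxv : x ∈ Γ.neighborSet v := G₂.adj_sub hx
  rw [hv] at hxv
  rcases hxv with rfl | hxb
  · exact absurd (G₂.edge_vert hx.symm) (Set.disjoint_left.1 hG haG₁)
  · exact hxb

/-- Let `Γ` be a finite connected leafless simple graph containing two
vertex-disjoint cycle subgraphs.  If every pair of vertex-disjoint edges of `Γ` is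
separable, then no 3-cycle of `Γ` contains a vertex of degree 2 (degree computed in
`Γ`). -/
theorem separability_implies_no_bivalent_vertex_on_triangle
    (V : Type) [Fintype V] [DecidableEq V] (Γ : SimpleGraph V)
    (hconn : Γ.Connected)
    (hleafless : ∀ v : V, (Γ.neighborSet v).ncard ≠ 1)
    (hcycles : ∃ C₁ C₂ : Γ.Subgraph, IsCycleSubgraph C₁ ∧ IsCycleSubgraph C₂ ∧
      Disjoint C₁.verts C₂.verts)
    (hsep : ∀ (a b c d : V) (h₁ : Γ.Adj a b) (h₂ : Γ.Adj c d),
      Disjoint ({a, b} : Set V) ({c, d} : Set V) →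
      Separable (Γ.subgraphOfAdj h₁) (Γ.subgraphOfAdj h₂)) :
    ∀ H : Γ.Subgraph, IsCycleSubgraph H → H.verts.ncard = 3 →
      ∀ v ∈ H.verts, (Γ.neighborSet v).ncard ≠ 2 := by
  intro H hH hcard v hv hdeg
  have hHv := hH.2.2 v hv
  -- The two `H`-neighbours of the bivalent vertex `v` are all its `Γ`-neighbours.
  have hnbr : Γ.neighborSet v = H.neighborSet v :=
    (Set.eq_of_subset_of_ncard_le (H.neighborSet_subset v) (by omega) (Set.toFinite _)).symm
  obtain ⟨a, b, hab, hN⟩ := Set.ncard_eq_two.1 hHv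
  rw [hN] at hnbr
  have ha : ∀ c, Γ.Adj a c → c = v ∨ c = b := fun c =>
    mem_of_adj_of_bivalent hsep hab hnbr
  have hb : ∀ c, Γ.Adj b c → c = v ∨ c = a := fun c =>
    mem_of_adj_of_bivalent hsep hab.symm (by rw [hnbr, Set.pair_comm])
  have huniv : ∀ x, x ∈ ({v, a, b} : Set V) := by
    intro x
    have hreach := (SimpleGraph.reachable_iff_reflTransGen v x).1 (hconn.preconnected v x)
    induction hreach with
    | refl => simp
    | tail _ hadj ih =>
      rcases ih with rfl | rfl | rfl
      · exact Or.inr (hnbr ▸ hadj : _ ∈ ({a, b} : Set V))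
      · rcases ha _ hadj with rfl | rfl <;> simp
      · rcases hb _ hadj with rfl | rfl <;> simp
  obtain ⟨C₁, C₂, hC₁, hC₂, hC⟩ := hcycles
  have hunion := Set.ncard_union_eq hC (Set.toFinite _) (Set.toFinite _)
  have hle : (C₁.verts ∪ C₂.verts).ncard ≤ ({v, a, b} : Set V).ncard :=
    Set.ncard_le_ncard (fun x _ => huniv x) (Set.toFinite _)
  have h₁ := hC₁.three_le_ncard_verts
  have h₂ := hC₂.three_le_ncard_verts
  have h₃ : ({v, a, b} : Set V).ncard ≤ 3 :=
    (Set.ncard_insert_le _ _).trans (by rw [Set.ncard_pair hab])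
  omega

end GraphBraid
end
end
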